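/- arXiv:2510.06891 — 7 statements merged into one kernel-verified Lean document; each statement's English description precedes it below -/
import Mathlib

section
/- Let N₁, N₂ be real symmetric positive semidefinite d×d matrices and set N₃ := N₁ + N₂. For i ∈ {1,3} let M_i be a real symmetric positive semidefinite matrix with M_i² = N_i. Then M₃ − M₁ is positive semidefinite and √(tr((M₃ − M₁)²)) ≤ tr(M₃ − M₁). -/
/-!
If `(A - B) v = l v` with `v` a unit vector, then `A² - B² = A (A - B) + (A - B) B` gives
`v* (A² - B²) v = l (v* A v + v* B v)`, where the second factor is `2 v* A v - l`. For `l < 0` and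
`A` positive semidefinite this factor is positive, so `A² - B²` cannot be positive semidefinite.
The trace bound for a positive semidefinite `D` is the sum over all `i` and `j` of
`D i j * D j i ≤ D i i * D j j`, the nonnegativity of the `2 × 2` principal minors.
-/

open Matrix RCLike
open scoped ComplexOrder

section Eigenvector

variable {n R : Type*} [Fintype n] [DecidableEq n] [CommRing R] [StarRing R]

theorem dotProduct_sq_sub_sq_mulVec_of_sub_mulVec_eq_smul {A B : Matrix n n R} {v : n → R} {l : R}
    (hAB : (A - B).IsHermitian) (hl : IsSelfAdjoint l) (hv : (A - B) *ᵥ v = l • v) :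
    star v ⬝ᵥ (A ^ 2 - B ^ 2) *ᵥ v = l * (star v ⬝ᵥ A *ᵥ v + star v ⬝ᵥ B *ᵥ v) := by
  have hv_left : star v ᵥ* (A - B) = l • star v := by
    rw [← hAB.eq, ← star_mulVec, hv, star_smul, hl.star_eq]
  have hfactor : A ^ 2 - B ^ 2 = A * (A - B) + (A - B) * B := by noncomm_ring
  calc star v ⬝ᵥ (A ^ 2 - B ^ 2) *ᵥ v
      = star v ⬝ᵥ A *ᵥ ((A - B) *ᵥ v) + star v ᵥ* (A - B) ⬝ᵥ B *ᵥ v := by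
        rw [hfactor, add_mulVec, dotProduct_add, ← mulVec_mulVec, ← mulVec_mulVec,
          dotProduct_mulVec _ (A - B)]
    _ = l * (star v ⬝ᵥ A *ᵥ v + star v ⬝ᵥ B *ᵥ v) := by
        rw [hv, hv_left, mulVec_smul, dotProduct_smul, smul_dotProduct, smul_eq_mul, smul_eq_mul,
          mul_add]

end Eigenvector

variable {n 𝕜 : Type*} [RCLike 𝕜] {A B : Matrix n n 𝕜}

theorem posSemidef_sub_of_posSemidef_sq_sub_sq [Fintype n] [DecidableEq n]
    (hA : A.PosSemidef) (hB : B.IsHermitian) (h : (A ^ 2 - B ^ 2).PosSemidef) :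
    (A - B).PosSemidef := by
  have hD : (A - B).IsHermitian := hA.isHermitian.sub hB
  refine hD.posSemidef_iff_eigenvalues_nonneg.2 fun i => ?_
  set l : ℝ := hD.eigenvalues i
  set v : n → 𝕜 := ⇑(hD.eigenvectorBasis i)
  have hv : (A - B) *ᵥ v = (l : 𝕜) • v := by
    rw [hD.mulVec_eigenvectorBasis i, RCLike.real_smul_eq_coe_smul (K := 𝕜)]
  have hv_unit : star v ⬝ᵥ v = 1 := by
    rw [dotProduct_comm, ← EuclideanSpace.inner_eq_star_dotProduct]
    simp
  have hA_nonneg : 0 ≤ re (star v ⬝ᵥ A *ᵥ v) := hA.re_dotProduct_nonneg v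
  have hdiff : re (star v ⬝ᵥ A *ᵥ v) - re (star v ⬝ᵥ B *ᵥ v) = l := by
    rw [← map_sub, ← dotProduct_sub, ← sub_mulVec, hv, dotProduct_smul, hv_unit, smul_eq_mul,
      mul_one, ofReal_re]
  have hprod : 0 ≤ l * (re (star v ⬝ᵥ A *ᵥ v) + re (star v ⬝ᵥ B *ᵥ v)) := by
    rw [← map_add, ← re_ofReal_mul,
      ← dotProduct_sq_sub_sq_mulVec_of_sub_mulVec_eq_smul hD (conj_ofReal l) hv]
    exact h.re_dotProduct_nonneg v
  by_contra! hl : l < 0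
  exact hprod.not_gt (mul_neg_of_neg_of_pos hl (by linarith))

theorem apply_mul_apply_le_of_posSemidef (hA : A.PosSemidef) (i j : n) :
    A i j * A j i ≤ A i i * A j j := by
  have hminor : 0 ≤ (A.submatrix ![i, j] ![i, j]).det := (hA.submatrix ![i, j]).det_nonneg
  rw [det_fin_two] at hminor
  simpa using hminor

variable [Fintype n] [DecidableEq n]

theorem trace_sq_le_sq_trace_of_posSemidef (hA : A.PosSemidef) :
    (A ^ 2).trace ≤ A.trace ^ 2 :=
  calc (A ^ 2).trace = ∑ i, ∑ j, A i j * A j i := by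
        simp only [sq, trace, diag_apply, mul_apply]
    _ ≤ ∑ i, ∑ j, A i i * A j j :=
        Finset.sum_le_sum fun i _ => Finset.sum_le_sum fun j _ =>
          apply_mul_apply_le_of_posSemidef hA i j
    _ = A.trace ^ 2 := by
        simp only [sq, trace, diag_apply, Finset.sum_mul_sum]

theorem sqrt_re_trace_sq_le_re_trace_of_posSemidef (hA : A.PosSemidef) :
    √(re (A ^ 2).trace) ≤ re A.trace := by
  obtain ⟨htrace_re, htrace_im⟩ := RCLike.nonneg_iff.1 hA.trace_nonneg
  refine Real.sqrt_le_iff.2 ⟨htrace_re, ?_⟩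
  calc re (A ^ 2).trace ≤ re (A.trace ^ 2) :=
        (RCLike.le_iff_re_im.1 (trace_sq_le_sq_trace_of_posSemidef hA)).1
    _ = re A.trace ^ 2 := by simp [sq, htrace_im]

theorem sqrt_trace_sq_le_trace_of_sqrt_psd_general (hA : A.PosSemidef) (hB : B.IsHermitian)
    (h : (A ^ 2 - B ^ 2).PosSemidef) :
    (A - B).PosSemidef ∧ √(re ((A - B) ^ 2).trace) ≤ re (A - B).trace :=
  have hD : (A - B).PosSemidef := posSemidef_sub_of_posSemidef_sq_sub_sq hA hB h
  ⟨hD, sqrt_re_trace_sq_le_re_trace_of_posSemidef hD⟩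

/-- If `N₁, N₂` are symmetric positive semidefinite, `N₃ = N₁ + N₂`,
and `M₁, M₃` are symmetric positive semidefinite square roots of `N₁` and `N₃`,
then `M₃ - M₁` is positive semidefinite and `√(tr((M₃ - M₁)²)) ≤ tr(M₃ - M₁)`. -/
theorem sqrt_trace_sq_le_trace_of_sqrt_psd
    (d : ℕ) (N₁ N₂ M₁ M₃ : Matrix (Fin d) (Fin d) ℝ)
    (hN₁ : N₁.PosSemidef) (hN₂ : N₂.PosSemidef)
    (hM₁ : M₁.PosSemidef) (hM₃ : M₃.PosSemidef)
    (hsq₁ : M₁ ^ 2 = N₁) (hsq₃ : M₃ ^ 2 = N₁ + N₂) :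
    (M₃ - M₁).PosSemidef ∧
      Real.sqrt (Matrix.trace ((M₃ - M₁) ^ 2)) ≤ Matrix.trace (M₃ - M₁) :=
  sqrt_trace_sq_le_trace_of_sqrt_psd_general hM₃ hM₁.isHermitian
    (by rwa [hsq₃, hsq₁, add_sub_cancel_left])
end

section
/- Let g : [1,∞) → ℝ be measurable with ∫₁^∞ |g(t)| t^{−1} dt < ∞. Then there exists an increasing sequence (t_n)_{n∈ℕ} in [1,∞) such that t_n → ∞, t_{n+1}/t_n → 1 and g(t_n) → 0 as n → ∞. -/
open Filter MeasureTheory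

/-!
With respect to the measure `dt/t`, the interval `[x, x e^δ]` has mass `δ`. So if the tail
`F x = ∫_x^∞ |g t| dt/t` is less than `δ²`, then `|g| < δ` somewhere on this interval. Taking
`δ = √(F x) + 1/x`, where `1/x` only makes the inequality `F x < δ²` strict, gives points
`y x ≥ x` with `y x ∼ x` and `g (y x) → 0`, since `δ → 0`.
The recursion `t (n + 1) = y (t n + 1)` then yields the sequence, the shift by `1` forcing
`t n → ∞` without affecting the limit of the ratios.
-/

open Asymptotics Set
open scoped ENNReal Topology

theorem tendsto_setLIntegral_Ici_zero {α : Type*} [Preorder α] [NoMaxOrder α]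
    [(atTop : Filter α).IsCountablyGenerated] [TopologicalSpace α] [ClosedIciTopology α]
    [MeasurableSpace α] [OpensMeasurableSpace α] {μ : Measure α} {f : α → ℝ≥0∞} {a : α}
    (hf : ∫⁻ x in Ici a, f x ∂μ ≠ ∞) :
    Tendsto (fun b => ∫⁻ x in Ici b, f x ∂μ) atTop (𝓝 0) := by
  have hempty : ⋂ b : α, Ici b = ∅ := iInter_eq_empty_iff.2 fun x =>
    (exists_gt x).imp fun _ hb => hb.not_ge
  have hfin : μ.withDensity f (Ici a) ≠ ∞ := by rwa [withDensity_apply f measurableSet_Ici]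
  simpa only [Function.comp_def, withDensity_apply f measurableSet_Ici, hempty, measure_empty]
    using tendsto_measure_iInter_atTop (fun _ => measurableSet_Ici.nullMeasurableSet)
      antitone_Ici ⟨a, hfin⟩

theorem setLIntegral_ofReal_inv_Icc {a b : ℝ} (ha : 0 < a) (hab : a ≤ b) :
    ∫⁻ t in Icc a b, ENNReal.ofReal t⁻¹ = ENNReal.ofReal (Real.log (b / a)) := by
  have hpos : ∀ t ∈ Icc a b, 0 < t := fun t ht => ha.trans_le ht.1
  have hint : IntegrableOn (fun t : ℝ => t⁻¹) (Icc a b) :=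
    (continuousOn_inv₀.mono fun t ht => (hpos t ht).ne').integrableOn_Icc
  rw [← ofReal_integral_eq_lintegral_ofReal hint
      (ae_restrict_of_forall_mem measurableSet_Icc fun t ht => (inv_pos.2 (hpos t ht)).le),
    integral_Icc_eq_integral_Ioc, ← intervalIntegral.integral_of_le hab,
    integral_inv_of_pos ha (ha.trans_le hab)]

theorem exists_mem_Icc_lt_of_setLIntegral_div_lt {f : ℝ → ℝ} {a b c : ℝ} (ha : 0 < a)
    (hab : a ≤ b)
    (hlt : ∫⁻ t in Icc a b, ENNReal.ofReal (f t / t) < ENNReal.ofReal (c * Real.log (b / a))) :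
    ∃ t ∈ Icc a b, f t < c := by
  have hlog : 0 ≤ Real.log (b / a) := Real.log_nonneg ((one_le_div ha).2 hab)
  have hc : 0 ≤ c := (pos_of_mul_pos_left (ENNReal.ofReal_pos.1 hlt.bot_lt) hlog).le
  by_contra! hle
  refine hlt.not_ge ?_
  calc ENNReal.ofReal (c * Real.log (b / a))
      = ∫⁻ t in Icc a b, ENNReal.ofReal c * ENNReal.ofReal t⁻¹ := by
        rw [lintegral_const_mul _ (by fun_prop), setLIntegral_ofReal_inv_Icc ha hab,
          ENNReal.ofReal_mul hc]
    _ ≤ ∫⁻ t in Icc a b, ENNReal.ofReal (f t / t) := by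
        refine setLIntegral_mono' measurableSet_Icc fun t ht => ?_
        have ht0 : 0 < t := ha.trans_le ht.1
        rw [← ENNReal.ofReal_mul hc, ← div_eq_mul_inv]
        gcongr
        exact hle t ht

theorem exists_mem_Icc_mul_exp_lt_of_setLIntegral_div_lt_sq {f : ℝ → ℝ} {x δ : ℝ} (hx : 0 < x)
    (hδ : 0 ≤ δ) (hlt : ∫⁻ t in Ici x, ENNReal.ofReal (f t / t) < ENNReal.ofReal (δ ^ 2)) :
    ∃ y ∈ Icc x (x * Real.exp δ), f y < δ := by
  refine exists_mem_Icc_lt_of_setLIntegral_div_lt hx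
    (le_mul_of_one_le_right hx.le (Real.one_le_exp hδ)) ?_
  rw [mul_div_cancel_left₀ _ hx.ne', Real.log_exp, ← sq]
  exact (lintegral_mono_set Icc_subset_Ici_self).trans_lt hlt

theorem exists_isEquivalent_id_tendsto_zero_of_setLIntegral_div_lt_top {E : Type*}
    [SeminormedAddGroup E] {g : ℝ → E} {a : ℝ} (ha : 0 < a)
    (hint : ∫⁻ t in Ici a, ENNReal.ofReal (‖g t‖ / t) < ∞) :
    ∃ y : ℝ → ℝ, (∀ x, a ≤ x → x ≤ y x) ∧ y ~[atTop] id ∧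
      Tendsto (fun x => g (y x)) atTop (𝓝 0) := by
  let F : ℝ → ℝ := fun x => (∫⁻ t in Ici x, ENNReal.ofReal (‖g t‖ / t)).toReal
  let δ : ℝ → ℝ := fun x => √(F x) + x⁻¹
  have hF0 : Tendsto F atTop (𝓝 0) :=
    (ENNReal.tendsto_toReal ENNReal.zero_ne_top).comp (tendsto_setLIntegral_Ici_zero hint.ne)
  have hδ0 : Tendsto δ atTop (𝓝 0) := by simpa [δ] using hF0.sqrt.add tendsto_inv_atTop_zero
  have hexists : ∀ x, a ≤ x → ∃ y ∈ Icc x (x * Real.exp (δ x)), ‖g y‖ < δ x := by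
    intro x hx
    have hx0 : 0 < x := ha.trans_le hx
    have hδpos : 0 < δ x := by positivity
    have hFδ : F x < δ x ^ 2 :=
      (Real.sqrt_lt' hδpos).1 (lt_add_of_pos_right _ (inv_pos.2 hx0))
    have htail : ∫⁻ t in Ici x, ENNReal.ofReal (‖g t‖ / t) ≠ ∞ :=
      ((lintegral_mono_set (Ici_subset_Ici.2 hx)).trans_lt hint).ne
    exact exists_mem_Icc_mul_exp_lt_of_setLIntegral_div_lt_sq hx0 hδpos.le
      ((ENNReal.lt_ofReal_iff_toReal_lt htail).2 hFδ)
  choose! y hymem hysmall using hexists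
  have hpos : ∀ᶠ x : ℝ in atTop, 0 < x := eventually_gt_atTop 0
  have hge : ∀ᶠ x in atTop, a ≤ x := eventually_ge_atTop a
  refine ⟨y, fun x hx => (hymem x hx).1, ?_, ?_⟩
  · refine (isEquivalent_iff_tendsto_one (hpos.mono fun x hx => hx.ne')).2 ?_
    have hexp : Tendsto (fun x => Real.exp (δ x)) atTop (𝓝 1) := by simpa using hδ0.rexp
    refine tendsto_of_tendsto_of_tendsto_of_le_of_le' tendsto_const_nhds hexp ?_ ?_
    · filter_upwards [hpos, hge] with x hx0 hx using (one_le_div hx0).2 (hymem x hx).1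
    · filter_upwards [hpos, hge] with x hx0 hx using (div_le_iff₀' hx0).2 (hymem x hx).2
  · exact squeeze_zero_norm' (hge.mono fun x hx => (hysmall x hx).le) hδ0

theorem exists_strictMono_succ_eq_of_isEquivalent_id {y : ℝ → ℝ} {a : ℝ}
    (hle : ∀ x, a ≤ x → x ≤ y x) (hy : y ~[atTop] id) :
    ∃ t : ℕ → ℝ, StrictMono t ∧ (∀ n, a ≤ t n) ∧ Tendsto t atTop atTop ∧
      Tendsto (fun n => t (n + 1) / t n) atTop (𝓝 1) ∧ ∀ n, t (n + 1) = y (t n + 1) := by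
  let t : ℕ → ℝ := fun n => (fun x => y (x + 1))^[n] a
  have hsucc : ∀ n, t (n + 1) = y (t n + 1) := fun n => Function.iterate_succ_apply' _ n a
  have hstep : ∀ n, a ≤ t n → t n + 1 ≤ t (n + 1) := fun n hn =>
    (hle _ (hn.trans (lt_add_one _).le)).trans_eq (hsucc n).symm
  have hmem : ∀ n, a ≤ t n := fun n => by
    induction n with
    | zero => exact le_rfl
    | succ n ih => exact ih.trans ((lt_add_one _).le.trans (hstep n ih))
  have hgrowth : ∀ n : ℕ, a + n ≤ t n := fun n => by
    induction n with
    | zero => simp [t]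
    | succ n ih =>
      push_cast
      linarith [hstep n (hmem n)]
  have htop : Tendsto t atTop atTop :=
    tendsto_atTop_mono hgrowth (tendsto_atTop_add_const_left _ a tendsto_natCast_atTop_atTop)
  have hshift : (fun n => t n + 1) ~[atTop] t :=
    IsEquivalent.refl.add_isLittleO ((isLittleO_const_id_atTop (1 : ℝ)).comp_tendsto htop)
  have hequiv : (fun n => t (n + 1)) ~[atTop] t := by
    simp only [hsucc]
    exact (hy.comp_tendsto (tendsto_atTop_add_const_right _ 1 htop)).trans hshift
  exact ⟨t, strictMono_nat_of_lt_succ fun n => (lt_add_one _).trans_le (hstep n (hmem n)), hmem,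
    htop, (isEquivalent_iff_tendsto_one (htop.eventually_ne_atTop 0)).1 hequiv, hsucc⟩

theorem exists_seq_tendsto_zero_of_integrable_div_general {E : Type*} [SeminormedAddGroup E]
    {g : ℝ → E} {a : ℝ} (ha : 0 < a)
    (hint : ∫⁻ t in Ici a, ENNReal.ofReal (‖g t‖ / t) < ∞) :
    ∃ t : ℕ → ℝ, StrictMono t ∧ (∀ n, a ≤ t n) ∧
      Tendsto t atTop atTop ∧
      Tendsto (fun n => t (n + 1) / t n) atTop (𝓝 1) ∧
      Tendsto (fun n => g (t n)) atTop (𝓝 0) := by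
  obtain ⟨y, hle, hy, hgy⟩ := exists_isEquivalent_id_tendsto_zero_of_setLIntegral_div_lt_top ha hint
  obtain ⟨t, hmono, hmem, htop, hratio, hsucc⟩ :=
    exists_strictMono_succ_eq_of_isEquivalent_id hle hy
  refine ⟨t, hmono, hmem, htop, hratio, (tendsto_add_atTop_iff_nat 1).1 ?_⟩
  simp only [hsucc]
  exact hgy.comp (tendsto_atTop_add_const_right _ 1 htop)

/-- If `g : [1,∞) → ℝ` is measurable with `∫₁^∞ |g(t)| t⁻¹ dt < ∞`,
then there is an increasing sequence `t_n → ∞` with `t_{n+1}/t_n → 1` and `g(t_n) → 0`. -/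
theorem exists_seq_tendsto_zero_of_integrable_div
    (g : ℝ → ℝ) (hg : Measurable g)
    (hint : ∫⁻ t in Set.Ici (1 : ℝ), ENNReal.ofReal (|g t| / t) < ⊤) :
    ∃ t : ℕ → ℝ, StrictMono t ∧ (∀ n, 1 ≤ t n) ∧
      Tendsto t atTop atTop ∧
      Tendsto (fun n => t (n + 1) / t n) atTop (nhds 1) ∧
      Tendsto (fun n => g (t n)) atTop (nhds 0) :=
  exists_seq_tendsto_zero_of_integrable_div_general one_pos hint
end

section
/- Let ξ₁ and ξ₂ be independent real-valued random variables with E[(ξ₁ − ξ₂)²] < ∞. Then E[ξ₁²] < ∞. -/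
open MeasureTheory ProbabilityTheory

/-!
By independence the law of `(Y, X)` is a product, so Fubini's theorem turns a moment bound on
`X - Y` into the same bound on `X - y` for almost every, hence for at least one, constant `y`.
-/

open scoped ENNReal

section

variable {α β E : Type*} [MeasurableSpace α] [MeasurableSpace β] [NormedAddCommGroup E] {p : ℝ≥0∞}

theorem memLp_prod_right_ae {μ : Measure α} {ν : Measure β} [SFinite ν] {f : α × β → E}
    (hf : MemLp f p (μ.prod ν)) :
    ∀ᵐ x ∂μ, MemLp (fun y => f (x, y)) p ν := by
  have hmeas := hf.aestronglyMeasurable.prodMk_left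
  rcases eq_or_ne p 0 with rfl | p_ne_zero
  · simpa only [memLp_zero_iff_aestronglyMeasurable] using hmeas
  rcases eq_or_ne p ∞ with rfl | p_ne_top
  · have hbound := Measure.ae_ae_of_ae_prod (enorm_ae_le_eLpNormEssSup f (μ.prod ν))
    filter_upwards [hmeas, hbound] with x hx hxbound
    exact ⟨hx, (essSup_le_of_ae_le _ hxbound).trans_lt hf.eLpNorm_lt_top⟩
  · have hpow := hf.integrable_norm_rpow p_ne_zero p_ne_top
    have hslice := ((integrable_prod_iff hpow.aestronglyMeasurable).mp hpow).1
    filter_upwards [hmeas, hslice] with x hx hxint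
    exact (integrable_norm_rpow_iff hx p_ne_zero p_ne_top).mp hxint

variable {Ω : Type*} [MeasurableSpace Ω] {μ : Measure Ω}

theorem ae_memLp_of_memLp_of_indepFun [IsFiniteMeasure μ] {X : Ω → α} {Y : Ω → β} {f : α × β → E}
    (hX : AEMeasurable X μ) (hY : AEMeasurable Y μ) (hindep : IndepFun X Y μ)
    (hf : AEStronglyMeasurable f ((μ.map X).prod (μ.map Y)))
    (hmem : MemLp (fun ω => f (X ω, Y ω)) p μ) :
    ∀ᵐ x ∂μ.map X, MemLp (fun ω => f (x, Y ω)) p μ := by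
  have hlaw : μ.map (fun ω => (X ω, Y ω)) = (μ.map X).prod (μ.map Y) :=
    hindep.map_prod_eq_prod_map_map hX hY
  have hprod : MemLp f p ((μ.map X).prod (μ.map Y)) := by
    rw [← hlaw] at hf ⊢
    exact (memLp_map_measure_iff hf (hX.prodMk hY)).mpr hmem
  filter_upwards [memLp_prod_right_ae hprod] with x hx
  exact hx.comp_of_map hY

theorem integrable_sq_of_integrable_sub_sq_general [IsProbabilityMeasure μ]
    [MeasurableSpace E] [BorelSpace E] [SecondCountableTopology E] {X Y : Ω → E}
    (hX : AEMeasurable X μ) (hY : AEMeasurable Y μ) (hindep : IndepFun X Y μ)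
    (hsub : MemLp (fun ω => X ω - Y ω) p μ) :
    MemLp X p μ := by
  have : IsProbabilityMeasure (μ.map Y) := Measure.isProbabilityMeasure_map hY
  obtain ⟨y, hy⟩ : ∃ y, MemLp (fun ω => X ω - y) p μ :=
    (ae_memLp_of_memLp_of_indepFun (f := fun z => z.2 - z.1) hY hX hindep.symm
      (by fun_prop) hsub).exists
  simpa only [Pi.add_def, sub_add_cancel] using hy.add (memLp_const y)

end

/-- If `ξ₁` and `ξ₂` are independent real random variables with
`E[(ξ₁ - ξ₂)²] < ∞`, then `E[ξ₁²] < ∞`. -/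
theorem integrable_sq_of_integrable_sub_sq
    {Ω : Type*} [MeasurableSpace Ω] (μ : Measure Ω) [IsProbabilityMeasure μ]
    (ξ₁ ξ₂ : Ω → ℝ) (h₁ : Measurable ξ₁) (h₂ : Measurable ξ₂)
    (hindep : IndepFun ξ₁ ξ₂ μ)
    (hint : Integrable (fun ω => (ξ₁ ω - ξ₂ ω) ^ 2) μ) :
    Integrable (fun ω => ξ₁ ω ^ 2) μ :=
  (integrable_sq_of_integrable_sub_sq_general h₁.aemeasurable h₂.aemeasurable hindep
    ((memLp_two_iff_integrable_sq (by fun_prop)).mpr hint)).integrable_sq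
end

section
/- Let ξ₁, ξ₂, ζ₁, ζ₂ be real-valued random variables such that ξ₁ is independent of ξ₂ and ζ₁ is independent of ζ₂. Then d_K(ξ₁ + ξ₂, ζ₁ + ζ₂) ≤ d_K(ξ₁, ζ₁) + d_K(ξ₂, ζ₂). -/
open MeasureTheory ProbabilityTheory

/-- The Kolmogorov distance between (the laws of) two real random variables. -/
noncomputable def kolDist {Ω : Type*} [MeasurableSpace Ω] (μ : Measure Ω)
    (ξ ζ : Ω → ℝ) : ℝ :=
  ⨆ x : ℝ, |(μ {ω | ξ ω ≤ x}).toReal - (μ {ω | ζ ω ≤ x}).toReal|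

/-!
Replace the summands one at a time: by the triangle inequality it suffices to compare
`ξ₁ + ξ₂` with an independent sum of copies of `ζ₁` and `ξ₂`, and then the latter with `ζ₁ + ζ₂`.
In each comparison one summand is common, and conditioning on its value only translates the
threshold `x` at which the distribution functions of the other summands are compared.
-/

open Set

section Distance

variable {α : Type*} [MeasurableSpace α] [Preorder α]

/-- The Kolmogorov distance between two finite measures: the uniform distance between their
distribution functions. It is a distance between laws, so that variables on different probability
spaces can be compared. Any preorder is allowed: the coordinatewise order on `Fin n → ℝ` gives the
multivariate Kolmogorov distance. -/
noncomputable def kolmogorovDist (μ ν : Measure α) : ℝ :=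
  ⨆ x : α, |μ.real (Iic x) - ν.real (Iic x)|

lemma kolmogorovDist_nonneg (μ ν : Measure α) : 0 ≤ kolmogorovDist μ ν :=
  Real.iSup_nonneg fun _ => abs_nonneg _

lemma abs_measureReal_Iic_sub_le_kolmogorovDist (μ ν : Measure α) [IsFiniteMeasure μ]
    [IsFiniteMeasure ν] (x : α) :
    |μ.real (Iic x) - ν.real (Iic x)| ≤ kolmogorovDist μ ν := by
  refine le_ciSup (f := fun x => |μ.real (Iic x) - ν.real (Iic x)|)
    ⟨max (μ.real univ) (ν.real univ), ?_⟩ x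
  rintro _ ⟨y, rfl⟩
  exact abs_sub_le_of_nonneg_of_le
    measureReal_nonneg ((measureReal_mono (subset_univ _)).trans (le_max_left _ _))
    measureReal_nonneg ((measureReal_mono (subset_univ _)).trans (le_max_right _ _))

lemma kolmogorovDist_triangle (μ ν ρ : Measure α) [IsFiniteMeasure μ] [IsFiniteMeasure ν]
    [IsFiniteMeasure ρ] : kolmogorovDist μ ρ ≤ kolmogorovDist μ ν + kolmogorovDist ν ρ :=
  Real.iSup_le
    (fun x => (abs_sub_le _ (ν.real (Iic x)) _).trans
      (add_le_add (abs_measureReal_Iic_sub_le_kolmogorovDist μ ν x)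
        (abs_measureReal_Iic_sub_le_kolmogorovDist ν ρ x)))
    (add_nonneg (kolmogorovDist_nonneg μ ν) (kolmogorovDist_nonneg ν ρ))

end Distance

section Convolution

variable {G : Type*} [AddCommGroup G] [PartialOrder G] [IsOrderedAddMonoid G]
  [TopologicalSpace G] [ClosedIicTopology G] [MeasurableSpace G] [OpensMeasurableSpace G]
  [MeasurableAdd₂ G]

lemma measurable_measure_Iic_sub (ν : Measure G) [SFinite ν] (x : G) :
    Measurable fun y => ν (Iic (x - y)) := by
  simp only [← preimage_const_add_Iic]
  exact measurable_measure_prodMk_left (measurable_add measurableSet_Iic)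

lemma conv_Iic (μ ν : Measure G) [SFinite ν] (x : G) :
    (μ ∗ ν) (Iic x) = ∫⁻ y, ν (Iic (x - y)) ∂μ := by
  rw [Measure.conv, Measure.map_apply measurable_add measurableSet_Iic,
    Measure.prod_apply (measurable_add measurableSet_Iic)]
  simp only [← preimage_const_add_Iic]
  rfl

lemma measureReal_conv_Iic (μ ν : Measure G) [IsFiniteMeasure ν] (x : G) :
    (μ ∗ ν).real (Iic x) = ∫ y, ν.real (Iic (x - y)) ∂μ := by
  rw [measureReal_def, conv_Iic]
  exact (integral_toReal (measurable_measure_Iic_sub ν x).aemeasurable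
    (ae_of_all _ fun _ => measure_lt_top _ _)).symm

lemma integrable_measureReal_Iic_sub (μ ν : Measure G) [IsFiniteMeasure μ] [IsFiniteMeasure ν]
    (x : G) : Integrable (fun y => ν.real (Iic (x - y))) μ := by
  refine .of_bound (measurable_measure_Iic_sub ν x).ennreal_toReal.aestronglyMeasurable
    (ν.real univ) (ae_of_all _ fun y => ?_)
  rw [Real.norm_of_nonneg measureReal_nonneg]
  exact measureReal_mono (subset_univ _)

lemma kolmogorovDist_conv_left_le (ρ μ ν : Measure G) [IsFiniteMeasure ρ] [IsFiniteMeasure μ]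
    [IsFiniteMeasure ν] :
    kolmogorovDist (ρ ∗ μ) (ρ ∗ ν) ≤ ρ.real univ * kolmogorovDist μ ν := by
  refine Real.iSup_le (fun x => ?_) (mul_nonneg measureReal_nonneg (kolmogorovDist_nonneg μ ν))
  calc |(ρ ∗ μ).real (Iic x) - (ρ ∗ ν).real (Iic x)|
      = ‖∫ y, (μ.real (Iic (x - y)) - ν.real (Iic (x - y))) ∂ρ‖ := by
        rw [measureReal_conv_Iic, measureReal_conv_Iic, Real.norm_eq_abs,
          integral_sub (integrable_measureReal_Iic_sub ρ μ x)
            (integrable_measureReal_Iic_sub ρ ν x)]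
    _ ≤ kolmogorovDist μ ν * ρ.real univ :=
        norm_integral_le_of_norm_le_const
          (ae_of_all _ fun y => abs_measureReal_Iic_sub_le_kolmogorovDist μ ν (x - y))
    _ = ρ.real univ * kolmogorovDist μ ν := mul_comm _ _

lemma kolmogorovDist_conv_right_le (ρ μ ν : Measure G) [IsFiniteMeasure ρ] [IsFiniteMeasure μ]
    [IsFiniteMeasure ν] :
    kolmogorovDist (μ ∗ ρ) (ν ∗ ρ) ≤ ρ.real univ * kolmogorovDist μ ν := by
  rw [Measure.conv_comm μ, Measure.conv_comm ν]
  exact kolmogorovDist_conv_left_le ρ μ ν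

lemma kolmogorovDist_conv_le (μ₁ μ₂ ν₁ ν₂ : Measure G) [IsFiniteMeasure μ₁]
    [IsFiniteMeasure μ₂] [IsFiniteMeasure ν₁] [IsFiniteMeasure ν₂] :
    kolmogorovDist (μ₁ ∗ μ₂) (ν₁ ∗ ν₂) ≤
      μ₂.real univ * kolmogorovDist μ₁ ν₁ + ν₁.real univ * kolmogorovDist μ₂ ν₂ :=
  calc kolmogorovDist (μ₁ ∗ μ₂) (ν₁ ∗ ν₂)
      ≤ kolmogorovDist (μ₁ ∗ μ₂) (ν₁ ∗ μ₂) + kolmogorovDist (ν₁ ∗ μ₂) (ν₁ ∗ ν₂) :=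
        kolmogorovDist_triangle _ _ _
    _ ≤ μ₂.real univ * kolmogorovDist μ₁ ν₁ + ν₁.real univ * kolmogorovDist μ₂ ν₂ :=
        add_le_add (kolmogorovDist_conv_right_le μ₂ μ₁ ν₁) (kolmogorovDist_conv_left_le ν₁ μ₂ ν₂)

theorem kolDist_add_le_general {Ω Ω' : Type*} [MeasurableSpace Ω] [MeasurableSpace Ω']
    {μ : Measure Ω} {μ' : Measure Ω'} [IsProbabilityMeasure μ] [IsProbabilityMeasure μ']
    {ξ₁ ξ₂ : Ω → G} {ζ₁ ζ₂ : Ω' → G}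
    (hξ₁ : AEMeasurable ξ₁ μ) (hξ₂ : AEMeasurable ξ₂ μ)
    (hζ₁ : AEMeasurable ζ₁ μ') (hζ₂ : AEMeasurable ζ₂ μ')
    (hξ : IndepFun ξ₁ ξ₂ μ) (hζ : IndepFun ζ₁ ζ₂ μ') :
    kolmogorovDist (μ.map (ξ₁ + ξ₂)) (μ'.map (ζ₁ + ζ₂)) ≤
      kolmogorovDist (μ.map ξ₁) (μ'.map ζ₁) + kolmogorovDist (μ.map ξ₂) (μ'.map ζ₂) := by
  have := Measure.isProbabilityMeasure_map hξ₂
  have := Measure.isProbabilityMeasure_map hζ₁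
  rw [hξ.map_add_eq_map_conv_map₀ hξ₁ hξ₂, hζ.map_add_eq_map_conv_map₀ hζ₁ hζ₂]
  simpa only [probReal_univ, one_mul] using
    kolmogorovDist_conv_le (μ.map ξ₁) (μ.map ξ₂) (μ'.map ζ₁) (μ'.map ζ₂)

end Convolution

lemma kolDist_eq_kolmogorovDist_map {Ω : Type*} [MeasurableSpace Ω] {μ : Measure Ω} {ξ ζ : Ω → ℝ}
    (hξ : AEMeasurable ξ μ) (hζ : AEMeasurable ζ μ) :
    kolDist μ ξ ζ = kolmogorovDist (μ.map ξ) (μ.map ζ) := by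
  simp only [kolmogorovDist, map_measureReal_apply_of_aemeasurable hξ measurableSet_Iic,
    map_measureReal_apply_of_aemeasurable hζ measurableSet_Iic]
  rfl

/-- If `ξ₁ ⟂ ξ₂` and `ζ₁ ⟂ ζ₂`, then
`d_K(ξ₁+ξ₂, ζ₁+ζ₂) ≤ d_K(ξ₁,ζ₁) + d_K(ξ₂,ζ₂)`. -/
theorem kolDist_add_le
    {Ω : Type*} [MeasurableSpace Ω] (μ : Measure Ω) [IsProbabilityMeasure μ]
    (ξ₁ ξ₂ ζ₁ ζ₂ : Ω → ℝ)
    (hξ₁ : Measurable ξ₁) (hξ₂ : Measurable ξ₂)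
    (hζ₁ : Measurable ζ₁) (hζ₂ : Measurable ζ₂)
    (hξ : IndepFun ξ₁ ξ₂ μ) (hζ : IndepFun ζ₁ ζ₂ μ) :
    kolDist μ (fun ω => ξ₁ ω + ξ₂ ω) (fun ω => ζ₁ ω + ζ₂ ω) ≤
      kolDist μ ξ₁ ζ₁ + kolDist μ ξ₂ ζ₂ := by
  rw [kolDist_eq_kolmogorovDist_map (hξ₁.fun_add hξ₂).aemeasurable (hζ₁.fun_add hζ₂).aemeasurable,
    kolDist_eq_kolmogorovDist_map hξ₁.aemeasurable hζ₁.aemeasurable,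
    kolDist_eq_kolmogorovDist_map hξ₂.aemeasurable hζ₂.aemeasurable]
  exact kolDist_add_le_general hξ₁.aemeasurable hξ₂.aemeasurable hζ₁.aemeasurable
    hζ₂.aemeasurable hξ hζ
end

section
/- Let ζ be a non-degenerate real-valued random variable (its law is not a Dirac mass), let (ξ_t)_{t≥1} be a family of real-valued random variables, and let f₁, f₂ : [1,∞) → (0,∞) be measurable. If d_K(f₁(t)·ξ_t, ζ) → 0 and d_K(f₂(t)·ξ_t, ζ) → 0 as t → ∞, then f₁(t)/f₂(t) → 1 as t → ∞. -/
open MeasureTheory Filter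

/-!
The Kolmogorov distance is invariant under a common positive scaling, so with `g = f₁ / f₂` the
triangle inequality through `f₁ ξ` gives
`d_K(g ζ, ζ) ≤ d_K(g ζ, f₁ ξ) + d_K(f₁ ξ, ζ) = d_K(ζ, f₂ ξ) + d_K(f₁ ξ, ζ) → 0`,
and everything reduces to scalings of `ζ` itself.

Let `F` be the distribution function of `ζ` and `a > 1`. If `F (a x) = F x` for all `x`, then
following `x, a x, a² x, …` to `±∞` shows that `F` is `0` on the negatives and `1` on the positives,
that is, `ζ = 0` almost surely. Otherwise `F (a x) ≠ F x` for some `x`, and by monotonicity of `F`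
the gap `|F (a x) - F x|` bounds `d_K(b ζ, ζ)` from below for all `b ≥ a`. So `g` is eventually
below `a`; the same applies to `g⁻¹`, since `d_K(g⁻¹ ζ, ζ) = d_K(ζ, g ζ)`.
-/

section KolmogorovDistance

variable {Ω : Type*} [MeasurableSpace Ω] {μ : Measure Ω}

lemma abs_measureReal_sub_le_kolDist [IsFiniteMeasure μ] (ξ ζ : Ω → ℝ) (x : ℝ) :
    |μ.real {ω | ξ ω ≤ x} - μ.real {ω | ζ ω ≤ x}| ≤ kolDist μ ξ ζ := by
  refine le_ciSup (f := fun x : ℝ => |μ.real {ω | ξ ω ≤ x} - μ.real {ω | ζ ω ≤ x}|)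
    ⟨μ.real Set.univ, ?_⟩ x
  rintro _ ⟨y, rfl⟩
  exact abs_sub_le_of_nonneg_of_le measureReal_nonneg (measureReal_mono (Set.subset_univ _))
    measureReal_nonneg (measureReal_mono (Set.subset_univ _))

lemma kolDist_nonneg (ξ ζ : Ω → ℝ) : 0 ≤ kolDist μ ξ ζ :=
  Real.iSup_nonneg fun _ => abs_nonneg _

lemma kolDist_comm (ξ ζ : Ω → ℝ) : kolDist μ ξ ζ = kolDist μ ζ ξ :=
  iSup_congr fun _ => abs_sub_comm _ _

lemma kolDist_triangle [IsFiniteMeasure μ] (ξ η ζ : Ω → ℝ) :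
    kolDist μ ξ ζ ≤ kolDist μ ξ η + kolDist μ η ζ :=
  ciSup_le fun x => (abs_sub_le _ _ _).trans
    (add_le_add (abs_measureReal_sub_le_kolDist ξ η x) (abs_measureReal_sub_le_kolDist η ζ x))

lemma kolDist_const_mul {c : ℝ} (hc : 0 < c) (ξ ζ : Ω → ℝ) :
    kolDist μ (fun ω => c * ξ ω) (fun ω => c * ζ ω) = kolDist μ ξ ζ := by
  refine ((mul_left_surjective₀ hc.ne').iSup_congr (c * ·) fun x => ?_).symm
  simp only [mul_le_mul_iff_right₀ hc]

lemma kolDist_inv_mul_self {c : ℝ} (hc : 0 < c) (ζ : Ω → ℝ) :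
    kolDist μ (fun ω => c⁻¹ * ζ ω) ζ = kolDist μ (fun ω => c * ζ ω) ζ := by
  rw [← kolDist_const_mul hc, kolDist_comm]
  simp only [mul_inv_cancel_left₀ hc.ne']

lemma kolDist_div_mul_self_le [IsFiniteMeasure μ] {b c : ℝ} (hb : 0 < b) (hc : 0 < c)
    (ξ ζ : Ω → ℝ) :
    kolDist μ (fun ω => b / c * ζ ω) ζ ≤
      kolDist μ (fun ω => b * ξ ω) ζ + kolDist μ (fun ω => c * ξ ω) ζ := by
  have hscale : kolDist μ (fun ω => b / c * ζ ω) (fun ω => b * ξ ω) =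
      kolDist μ (fun ω => c * ξ ω) ζ := by
    rw [kolDist_comm, ← kolDist_const_mul (div_pos hb hc) (fun ω => c * ξ ω) ζ]
    simp only [← mul_assoc, div_mul_cancel₀ b hc.ne']
  calc kolDist μ (fun ω => b / c * ζ ω) ζ
      ≤ kolDist μ (fun ω => b / c * ζ ω) (fun ω => b * ξ ω) + kolDist μ (fun ω => b * ξ ω) ζ :=
        kolDist_triangle _ _ _
    _ = kolDist μ (fun ω => b * ξ ω) ζ + kolDist μ (fun ω => c * ξ ω) ζ := by
        rw [hscale, add_comm]

end KolmogorovDistance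

section ScaleInvariance

open ProbabilityTheory

lemma eq_of_mul_left_invariant_of_tendsto {M α : Type*} [Monoid M] [TopologicalSpace α] [T2Space α]
    {F : M → α} {a x : M} {l : Filter M} {L : α} (hF : ∀ y, F (a * y) = F y)
    (hx : Tendsto (fun n : ℕ => a ^ n * x) atTop l) (hL : Tendsto F l (nhds L)) : F x = L := by
  have hconst : ∀ n : ℕ, F (a ^ n * x) = F x := by
    intro n
    induction n with
    | zero => rw [pow_zero, one_mul]
    | succ n ih => rw [pow_succ', mul_assoc, hF, ih]
  exact tendsto_nhds_unique tendsto_const_nhds ((hL.comp hx).congr hconst)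

lemma abs_map_mul_sub_le_of_monotone {K G : Type*} [Field K] [LinearOrder K]
    [IsStrictOrderedRing K] [AddCommGroup G] [LinearOrder G] [IsOrderedAddMonoid G] {F : K → G}
    (hF : Monotone F) {a b : K} (ha : 1 ≤ a) (hab : a ≤ b) (x : K) :
    |F (a * x) - F x| ≤ |F (b * x) - F x| := by
  have hmem : a * x ∈ Set.uIcc x (b * x) := by
    have := Set.mem_image_of_mem (· * x) (Set.mem_uIcc_of_le ha hab)
    rwa [Set.image_mul_const_uIcc, one_mul] at this
  exact Set.abs_sub_left_of_mem_uIcc (hF.mapsTo_uIcc hmem)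

lemma eq_dirac_zero_of_cdf_eq {ν : Measure ℝ} [IsProbabilityMeasure ν]
    (hneg : ∀ x < 0, cdf ν x = 0) (hpos : ∀ x > 0, cdf ν x = 1) : ν = Measure.dirac 0 := by
  have hzero : cdf ν 0 = 1 := by
    have hright : Tendsto (cdf ν) (nhdsWithin 0 (Set.Ioi 0)) (nhds (cdf ν 0)) :=
      ((cdf ν).right_continuous 0).mono Set.Ioi_subset_Ici_self
    exact tendsto_nhds_unique hright
      (tendsto_const_nhds.congr' (eventually_nhdsWithin_of_forall fun x hx => (hpos x hx).symm))
  refine Measure.eq_of_cdf _ _ (StieltjesFunction.ext fun x => ?_)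
  rw [cdf_eq_real (Measure.dirac 0)]
  rcases lt_trichotomy x 0 with hx | rfl | hx
  · simp [hneg x hx, measureReal_def, hx]
  · simp [hzero, measureReal_def]
  · simp [hpos x hx, measureReal_def, hx.le]

lemma eq_dirac_zero_of_cdf_mul_invariant {ν : Measure ℝ} [IsProbabilityMeasure ν] {a : ℝ}
    (ha : 1 < a) (hν : ∀ x, cdf ν (a * x) = cdf ν x) : ν = Measure.dirac 0 := by
  have hpow := tendsto_pow_atTop_atTop_of_one_lt ha
  exact eq_dirac_zero_of_cdf_eq
    (fun x hx => eq_of_mul_left_invariant_of_tendsto hν (hpow.atTop_mul_const_of_neg hx)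
      (tendsto_cdf_atBot ν))
    (fun x hx => eq_of_mul_left_invariant_of_tendsto hν (hpow.atTop_mul_const hx)
      (tendsto_cdf_atTop ν))

end ScaleInvariance

section Rescaling

open ProbabilityTheory

variable {Ω : Type*} [MeasurableSpace Ω] {μ : Measure Ω} [IsProbabilityMeasure μ] {ζ : Ω → ℝ}

lemma cdf_map_eq_measureReal (hζ : AEMeasurable ζ μ) (x : ℝ) :
    cdf (μ.map ζ) x = μ.real {ω | ζ ω ≤ x} := by
  have := Measure.isProbabilityMeasure_map hζ
  rw [cdf_eq_real, map_measureReal_apply_of_aemeasurable hζ measurableSet_Iic]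
  rfl

lemma abs_cdf_sub_le_kolDist_const_mul (hζ : AEMeasurable ζ μ) {b : ℝ} (hb : 0 < b) (x : ℝ) :
    |cdf (μ.map ζ) (b * x) - cdf (μ.map ζ) x| ≤ kolDist μ (fun ω => b * ζ ω) ζ := by
  have h := abs_measureReal_sub_le_kolDist (μ := μ) (fun ω => b * ζ ω) ζ (b * x)
  simp only [mul_le_mul_iff_right₀ hb] at h
  rwa [cdf_map_eq_measureReal hζ, cdf_map_eq_measureReal hζ, abs_sub_comm]

lemma exists_cdf_mul_ne (hζ : AEMeasurable ζ μ) (hζ_ne : ¬ ζ =ᵐ[μ] 0) {a : ℝ} (ha : 1 < a) :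
    ∃ x, cdf (μ.map ζ) (a * x) ≠ cdf (μ.map ζ) x := by
  have := Measure.isProbabilityMeasure_map hζ
  by_contra! hinv
  refine hζ_ne (ae_of_ae_map (p := (· = 0)) hζ ?_)
  rw [eq_dirac_zero_of_cdf_mul_invariant ha hinv, ae_dirac_eq]
  rfl

lemma exists_pos_le_kolDist_const_mul (hζ : AEMeasurable ζ μ) (hζ_ne : ¬ ζ =ᵐ[μ] 0) {a : ℝ}
    (ha : 1 < a) : ∃ δ > 0, ∀ b ≥ a, δ ≤ kolDist μ (fun ω => b * ζ ω) ζ := by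
  obtain ⟨x, hx⟩ := exists_cdf_mul_ne hζ hζ_ne ha
  refine ⟨|cdf (μ.map ζ) (a * x) - cdf (μ.map ζ) x|, abs_pos.2 (sub_ne_zero.2 hx), fun b hab => ?_⟩
  calc |cdf (μ.map ζ) (a * x) - cdf (μ.map ζ) x|
      ≤ |cdf (μ.map ζ) (b * x) - cdf (μ.map ζ) x| :=
        abs_map_mul_sub_le_of_monotone (monotone_cdf _) ha.le hab x
    _ ≤ kolDist μ (fun ω => b * ζ ω) ζ :=
        abs_cdf_sub_le_kolDist_const_mul hζ (by linarith) x

variable {ι : Type*} {l : Filter ι}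

lemma eventually_lt_of_tendsto_kolDist_const_mul (hζ : AEMeasurable ζ μ) (hζ_ne : ¬ ζ =ᵐ[μ] 0)
    {g : ι → ℝ} (hg : Tendsto (fun t => kolDist μ (fun ω => g t * ζ ω) ζ) l (nhds 0)) {a : ℝ}
    (ha : 1 < a) : ∀ᶠ t in l, g t < a := by
  obtain ⟨δ, hδ, hle⟩ := exists_pos_le_kolDist_const_mul hζ hζ_ne ha
  filter_upwards [hg.eventually_lt_const hδ] with t ht
  exact lt_of_not_ge fun hat => ht.not_ge (hle _ hat)

lemma tendsto_one_of_tendsto_kolDist_const_mul (hζ : AEMeasurable ζ μ) (hζ_ne : ¬ ζ =ᵐ[μ] 0)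
    {g : ι → ℝ} (hg_pos : ∀ᶠ t in l, 0 < g t)
    (hg : Tendsto (fun t => kolDist μ (fun ω => g t * ζ ω) ζ) l (nhds 0)) :
    Tendsto g l (nhds 1) := by
  have hg_inv : Tendsto (fun t => kolDist μ (fun ω => (g t)⁻¹ * ζ ω) ζ) l (nhds 0) :=
    hg.congr' (hg_pos.mono fun t ht => (kolDist_inv_mul_self ht ζ).symm)
  refine tendsto_order.2 ⟨fun b hb => ?_, fun a ha =>
    eventually_lt_of_tendsto_kolDist_const_mul hζ hζ_ne hg ha⟩
  rcases le_or_gt b 0 with hb₀ | hb₀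
  · exact hg_pos.mono fun t ht => hb₀.trans_lt ht
  · filter_upwards [hg_pos, eventually_lt_of_tendsto_kolDist_const_mul hζ hζ_ne hg_inv
      ((one_lt_inv₀ hb₀).2 hb)] with t ht hlt
    exact (inv_lt_inv₀ ht hb₀).1 hlt

theorem scaling_asymptotically_unique_general (hζ : AEMeasurable ζ μ) (hζ_ne : ¬ ζ =ᵐ[μ] 0)
    {ξ : ι → Ω → ℝ} {f₁ f₂ : ι → ℝ} (hf₁ : ∀ᶠ t in l, 0 < f₁ t) (hf₂ : ∀ᶠ t in l, 0 < f₂ t)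
    (h₁ : Tendsto (fun t => kolDist μ (fun ω => f₁ t * ξ t ω) ζ) l (nhds 0))
    (h₂ : Tendsto (fun t => kolDist μ (fun ω => f₂ t * ξ t ω) ζ) l (nhds 0)) :
    Tendsto (fun t => f₁ t / f₂ t) l (nhds 1) := by
  refine tendsto_one_of_tendsto_kolDist_const_mul hζ hζ_ne
    (by filter_upwards [hf₁, hf₂] with t using div_pos) ?_
  refine squeeze_zero' (.of_forall fun t => kolDist_nonneg _ _) ?_ (add_zero (0 : ℝ) ▸ h₁.add h₂)
  filter_upwards [hf₁, hf₂] with t ht₁ ht₂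
  exact kolDist_div_mul_self_le ht₁ ht₂ (ξ t) ζ

end Rescaling

/-- **asymptotic uniqueness of scaling functions.** If `ζ` is
non-degenerate and `d_K(fᵢ(t)·ξ_t, ζ) → 0` for `i = 1, 2` with `f₁, f₂ > 0`,
then `f₁(t)/f₂(t) → 1` as `t → ∞`. -/
theorem scaling_asymptotically_unique
    {Ω : Type*} [MeasurableSpace Ω] (μ : Measure Ω) [IsProbabilityMeasure μ]
    (ζ : Ω → ℝ) (hζ_meas : Measurable ζ)
    (hζ_nondeg : ∀ c : ℝ, μ {ω | ζ ω = c} ≠ 1)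
    (ξ : ℝ → Ω → ℝ) (hξ_meas : ∀ t, Measurable (ξ t))
    (f₁ f₂ : ℝ → ℝ) (hf₁_meas : Measurable f₁) (hf₂_meas : Measurable f₂)
    (hf₁_pos : ∀ t ≥ (1 : ℝ), 0 < f₁ t) (hf₂_pos : ∀ t ≥ (1 : ℝ), 0 < f₂ t)
    (h₁ : Tendsto (fun t => kolDist μ (fun ω => f₁ t * ξ t ω) ζ) atTop (nhds 0))
    (h₂ : Tendsto (fun t => kolDist μ (fun ω => f₂ t * ξ t ω) ζ) atTop (nhds 0)) :
    Tendsto (fun t => f₁ t / f₂ t) atTop (nhds 1) :=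
  scaling_asymptotically_unique_general hζ_meas.aemeasurable
    (fun h => hζ_nondeg 0 ((mem_ae_iff_prob_eq_one (hζ_meas (measurableSet_singleton 0))).1 h))
    ((eventually_ge_atTop 1).mono hf₁_pos) ((eventually_ge_atTop 1).mono hf₂_pos) h₁ h₂
end

section
/- Let ξ and ζ be real-valued random variables with E[|ξ|] < ∞ and E[|ζ|] < ∞, and let F(x) := P(ξ ≤ x) and G(x) := P(ζ ≤ x) be their distribution functions. Then for every η ∈ ℝ: E[e^{iηξ}] − E[e^{iηζ}] = −iη ∫_ℝ (F(y) − G(y)) e^{iηy} dy. -/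
open MeasureTheory Complex

/-!
By the fundamental theorem of calculus, for a function `f` with bounded derivative,
`f ζ - f ξ = ∫ (1_{ξ ≤ y} - 1_{ζ ≤ y}) f' y dy`, and the expectation of the kernel
`1_{ξ ≤ y} - 1_{ζ ≤ y}` is `F y - G y`. Taking expectations and exchanging them with the integral
over `y` gives `E[f ζ] - E[f ξ] = ∫ (F y - G y) f' y dy`; the exchange is legitimate because the
kernel has total mass `E|ξ - ζ| < ∞`. The theorem is the case `f y = e^{iηy}`.
-/

/-- The difference `1_{a ≤ y} - 1_{b ≤ y}` of the distribution functions at `y` of the point masses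
at `a` and `b`: the kernel which, averaged over `a = ξ` and `b = ζ`, gives the difference of the
distribution functions of `ξ` and `ζ`. -/
noncomputable def stepDiff (a b y : ℝ) : ℝ :=
  (Set.Ici a).indicator 1 y - (Set.Ici b).indicator 1 y

section StepDiff

variable (a b : ℝ)

lemma stepDiff_smul_eq_indicator_sub {M : Type*} [AddCommGroup M] [Module ℝ M] (f : ℝ → M) (y : ℝ) :
    stepDiff a b y • f y = (Set.Ico a b).indicator f y - (Set.Ico b a).indicator f y := by
  simp only [stepDiff, Set.indicator_apply, Set.mem_Ici, Set.mem_Ico, Pi.one_apply]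
  by_cases ha : a ≤ y <;> by_cases hb : b ≤ y <;> simp [ha, hb, not_lt.2, lt_of_not_ge]

lemma norm_stepDiff (y : ℝ) :
    ‖stepDiff a b y‖ = (Set.Ico (min a b) (max a b)).indicator 1 y := by
  simp only [stepDiff, Set.indicator_apply, Set.mem_Ici, Set.mem_Ico, Pi.one_apply,
    min_le_iff, ← not_le]
  by_cases ha : a ≤ y <;> by_cases hb : b ≤ y <;> simp [ha, hb]

lemma integral_norm_stepDiff : ∫ y, ‖stepDiff a b y‖ = |a - b| := by
  simp_rw [norm_stepDiff]
  rw [integral_indicator_one measurableSet_Ico, Real.volume_real_Ico_of_le min_le_max,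
    max_sub_min_eq_abs']

lemma integrable_stepDiff {ν : Measure ℝ} [IsLocallyFiniteMeasure ν] :
    Integrable (stepDiff a b) ν := by
  have h_eq : stepDiff a b = (Set.Ico a b).indicator 1 - (Set.Ico b a).indicator 1 := by
    ext y
    simpa using stepDiff_smul_eq_indicator_sub a b (1 : ℝ → ℝ) y
  have h_indicator (c d : ℝ) : Integrable ((Set.Ico c d).indicator (1 : ℝ → ℝ)) ν :=
    (integrable_indicator_iff measurableSet_Ico).2 (integrableOn_const measure_Ico_lt_top.ne)
  exact h_eq ▸ (h_indicator a b).sub (h_indicator b a)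

variable {a b} {E : Type*} [NormedAddCommGroup E] [NormedSpace ℝ E]

lemma integral_stepDiff_smul {ν : Measure ℝ} [NullSingletonClass ν] {f : ℝ → E}
    (hf : IntervalIntegrable f ν a b) :
    ∫ y, stepDiff a b y • f y ∂ν = ∫ y in a..b, f y ∂ν := by
  have h_Ico : Integrable ((Set.Ico a b).indicator f) ν :=
    (integrable_indicator_iff measurableSet_Ico).2 (hf.1.congr_set_ae Ico_ae_eq_Ioc)
  have h_Ico' : Integrable ((Set.Ico b a).indicator f) ν :=
    (integrable_indicator_iff measurableSet_Ico).2 (hf.2.congr_set_ae Ico_ae_eq_Ioc)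
  simp_rw [stepDiff_smul_eq_indicator_sub]
  rw [integral_sub h_Ico h_Ico', integral_indicator measurableSet_Ico,
    integral_indicator measurableSet_Ico, integral_Ico_eq_integral_Ioc,
    integral_Ico_eq_integral_Ioc, intervalIntegral]

lemma integral_stepDiff_smul_of_hasDerivAt [CompleteSpace E] {f f' : ℝ → E}
    (hf : ∀ y ∈ Set.uIcc a b, HasDerivAt f (f' y) y) (hf' : IntervalIntegrable f' volume a b) :
    ∫ y, stepDiff a b y • f' y = f b - f a := by
  rw [integral_stepDiff_smul hf']
  exact intervalIntegral.integral_eq_sub_of_hasDerivAt hf hf'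

end StepDiff

section RandomVariables

variable {Ω : Type*} [MeasurableSpace Ω] {μ : Measure Ω} {ξ ζ : Ω → ℝ}

lemma aestronglyMeasurable_prod_stepDiff {ν : Measure ℝ}
    (hξ : AEMeasurable ξ μ) (hζ : AEMeasurable ζ μ) :
    AEStronglyMeasurable (fun p : Ω × ℝ ↦ stepDiff (ξ p.1) (ζ p.1) p.2) (μ.prod ν) := by
  have h_step {χ : Ω → ℝ} (hχ : AEMeasurable χ μ) :
      AEStronglyMeasurable (fun p : Ω × ℝ ↦ (Set.Ici (χ p.1)).indicator (1 : ℝ → ℝ) p.2)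
        (μ.prod ν) :=
    (aestronglyMeasurable_const (b := (1 : ℝ))).indicator₀
      (nullMeasurableSet_le hχ.comp_fst measurable_snd.aemeasurable)
  exact (h_step hξ).sub (h_step hζ)

lemma integrable_prod_stepDiff [SFinite μ] (hξ : AEMeasurable ξ μ) (hζ : AEMeasurable ζ μ)
    (h_int : Integrable (ξ - ζ) μ) :
    Integrable (fun p : Ω × ℝ ↦ stepDiff (ξ p.1) (ζ p.1) p.2) (μ.prod volume) := by
  rw [integrable_prod_iff (aestronglyMeasurable_prod_stepDiff hξ hζ)]
  refine ⟨.of_forall fun ω ↦ integrable_stepDiff (ξ ω) (ζ ω), ?_⟩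
  simp only [integral_norm_stepDiff]
  exact h_int.abs

lemma integral_stepDiff_comp [IsFiniteMeasure μ] (hξ : AEMeasurable ξ μ) (hζ : AEMeasurable ζ μ)
    (y : ℝ) :
    ∫ ω, stepDiff (ξ ω) (ζ ω) y ∂μ = μ.real {ω | ξ ω ≤ y} - μ.real {ω | ζ ω ≤ y} := by
  have h_le {χ : Ω → ℝ} (hχ : AEMeasurable χ μ) : NullMeasurableSet {ω | χ ω ≤ y} μ :=
    nullMeasurableSet_le hχ aemeasurable_const
  have h_integrable {χ : Ω → ℝ} (hχ : AEMeasurable χ μ) :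
      Integrable ({ω | χ ω ≤ y}.indicator (1 : Ω → ℝ)) μ :=
    (integrable_const (1 : ℝ)).indicator₀ (h_le hχ)
  have h_integral {χ : Ω → ℝ} (hχ : AEMeasurable χ μ) :
      ∫ ω, {ω | χ ω ≤ y}.indicator (1 : Ω → ℝ) ω ∂μ = μ.real {ω | χ ω ≤ y} := by
    simp [integral_indicator₀ (h_le hχ)]
  rw [← h_integral hξ, ← h_integral hζ, ← integral_sub (h_integrable hξ) (h_integrable hζ)]
  -- `1_{[χ ω, ∞)} y` and `1_{χ ≤ y} ω` unfold to the same conditional on `χ ω ≤ y`.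
  rfl

theorem integral_comp_sub_comp_eq_integral_cdf_sub_smul
    {E : Type*} [NormedAddCommGroup E] [NormedSpace ℝ E] [CompleteSpace E]
    [IsFiniteMeasure μ] (hξ : AEMeasurable ξ μ) (hζ : AEMeasurable ζ μ)
    (h_int : Integrable (ξ - ζ) μ) {f f' : ℝ → E} {C : ℝ}
    (hf : ∀ y, HasDerivAt f (f' y) y) (hC : ∀ y, ‖f' y‖ ≤ C) :
    ∫ ω, (f (ζ ω) - f (ξ ω)) ∂μ
      = ∫ y, (μ.real {ω | ξ ω ≤ y} - μ.real {ω | ζ ω ≤ y}) • f' y := by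
  have hf'_meas : StronglyMeasurable f' :=
    (funext fun y ↦ (hf y).deriv : deriv f = f') ▸ stronglyMeasurable_deriv f
  have hf'_int (a b : ℝ) : IntervalIntegrable f' volume a b :=
    (intervalIntegrable_const (c := C)).mono_fun' hf'_meas.aestronglyMeasurable (.of_forall hC)
  have h_prod : Integrable (fun p : Ω × ℝ ↦ stepDiff (ξ p.1) (ζ p.1) p.2 • f' p.2)
      (μ.prod volume) :=
    (integrable_prod_stepDiff hξ hζ h_int).smul_bdd C
      (hf'_meas.comp_measurable measurable_snd).aestronglyMeasurable (.of_forall fun p ↦ hC p.2)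
  calc ∫ ω, (f (ζ ω) - f (ξ ω)) ∂μ
      = ∫ ω, (∫ y, stepDiff (ξ ω) (ζ ω) y • f' y) ∂μ := by
        simp_rw [integral_stepDiff_smul_of_hasDerivAt (fun y _ ↦ hf y) (hf'_int _ _)]
    _ = ∫ y, (∫ ω, stepDiff (ξ ω) (ζ ω) y • f' y ∂μ) := integral_integral_swap h_prod
    _ = ∫ y, (μ.real {ω | ξ ω ≤ y} - μ.real {ω | ζ ω ≤ y}) • f' y := by
        simp_rw [integral_smul_const, integral_stepDiff_comp hξ hζ]

end RandomVariables

lemma hasDerivAt_exp_mul_ofReal (c : ℂ) (y : ℝ) :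
    HasDerivAt (fun y : ℝ ↦ exp (c * y)) (c * exp (c * y)) y := by
  simpa [mul_comm] using (((hasDerivAt_id (y : ℂ)).const_mul c).cexp).comp_ofReal

theorem charFun_sub_eq_integral_cdf_sub_general
    {Ω : Type*} [MeasurableSpace Ω] {μ : Measure Ω} [IsFiniteMeasure μ] {ξ ζ : Ω → ℝ}
    (hξ : AEMeasurable ξ μ) (hζ : AEMeasurable ζ μ) (h_int : Integrable (ξ - ζ) μ) (η : ℝ) :
    (∫ ω, exp (I * η * ξ ω) ∂μ) - (∫ ω, exp (I * η * ζ ω) ∂μ)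
      = -I * η * ∫ y : ℝ,
          ((μ.real {ω | ξ ω ≤ y} - μ.real {ω | ζ ω ≤ y} : ℝ) : ℂ) * exp (I * η * y) := by
  have h_bound (y : ℝ) : ‖I * η * exp (I * η * y)‖ ≤ |η| := by
    simp [norm_exp]
  have h_exp {χ : Ω → ℝ} (hχ : AEMeasurable χ μ) : Integrable (fun ω ↦ exp (I * η * χ ω)) μ :=
    ProbabilityTheory.integrable_cexp_mul_of_re_mem_integrableExpSet hχ
      (by simp [ProbabilityTheory.integrableExpSet])
  have h_eq := integral_comp_sub_comp_eq_integral_cdf_sub_smul hξ hζ h_int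
    (hasDerivAt_exp_mul_ofReal (I * η)) h_bound
  rw [integral_sub (h_exp hζ) (h_exp hξ)] at h_eq
  simp_rw [real_smul, mul_left_comm _ (I * (η : ℂ)), integral_const_mul] at h_eq
  rw [← neg_sub, h_eq, neg_mul, neg_mul]

/-- For integrable real random variables `ξ, ζ` with distribution
functions `F, G`, and any `η ∈ ℝ`:
`E[e^{iηξ}] − E[e^{iηζ}] = −iη ∫_ℝ (F(y) − G(y)) e^{iηy} dy`. -/
theorem charFun_sub_eq_integral_cdf_sub
    {Ω : Type*} [MeasurableSpace Ω] (μ : Measure Ω) [IsProbabilityMeasure μ]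
    (ξ ζ : Ω → ℝ) (hξ_meas : Measurable ξ) (hζ_meas : Measurable ζ)
    (hξ_int : Integrable ξ μ) (hζ_int : Integrable ζ μ) :
    ∀ η : ℝ,
      (∫ ω, Complex.exp (Complex.I * η * ξ ω) ∂μ)
          - (∫ ω, Complex.exp (Complex.I * η * ζ ω) ∂μ)
        = -Complex.I * η *
            ∫ y : ℝ,
              (((μ {ω | ξ ω ≤ y}).toReal - (μ {ω | ζ ω ≤ y}).toReal : ℝ) : ℂ) *
                Complex.exp (Complex.I * η * y) := by
  exact charFun_sub_eq_integral_cdf_sub_general hξ_meas.aemeasurable hζ_meas.aemeasurable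
    (hξ_int.sub hζ_int)
end

section
/- Let d ≥ 2 and let ξ be uniformly distributed on the unit circle C = {x ∈ ℝ^d : x₁² + x₂² = 1, x₃ = ⋯ = x_d = 0}, i.e. ξ = (cos Θ, sin Θ, 0, …, 0) with Θ uniform on [0, 2π). For n ∈ ℕ set Y_n := (1 + 1/n)·ξ. Then d_C(Y_n, ξ) = 1 for all n ∈ ℕ, while d_K(Y_n, ξ) → 0 as n → ∞. In particular, for d ≥ 2 the convex distance d_C and the multivariate Kolmogorov distance d_K are not equivalent metrics. -/
open MeasureTheory Filter Real

/-- The convex distance between (the laws of) two random vectors in `ℝ^d`: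
the supremum of `|P(ξ ∈ A) − P(ζ ∈ A)|` over convex Borel sets `A`. -/
noncomputable def convexDist {d : ℕ} {Ω : Type*} [MeasurableSpace Ω]
    (μ : Measure Ω) (ξ ζ : Ω → EuclideanSpace ℝ (Fin d)) : ℝ :=
  ⨆ A : {A : Set (EuclideanSpace ℝ (Fin d)) // MeasurableSet A ∧ Convex ℝ A},
    |(μ (ξ ⁻¹' A.1)).toReal - (μ (ζ ⁻¹' A.1)).toReal|

/-- The multivariate Kolmogorov distance between (the laws of) two random vectors
in `ℝ^d`: the supremum of `|P(ξ ∈ A) − P(ζ ∈ A)|` over hyper-rays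
`A = (−∞,x₁] × ⋯ × (−∞,x_d]`. -/
noncomputable def kolDistVec {d : ℕ} {Ω : Type*} [MeasurableSpace Ω]
    (μ : Measure Ω) (ξ ζ : Ω → EuclideanSpace ℝ (Fin d)) : ℝ :=
  ⨆ x : Fin d → ℝ,
    |(μ {ω | ∀ i, ξ ω i ≤ x i}).toReal - (μ {ω | ∀ i, ζ ω i ≤ x i}).toReal|

/-!
A sphere lies inside its closed ball while every dilate of it by a factor `|c| > 1` lies outside,
so a single ball already shows that the convex distance is `1`. A hyper-ray only tests each
coordinate against a threshold: moving the vector by a small amount changes the outcome only if some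
coordinate is close to its threshold, and for an atomless coordinate this is unlikely uniformly in
the threshold. The coordinates `cos Θ` and `sin Θ` are atomless because `Θ` is and the level sets of
`cos` and `sin` are countable; the remaining coordinates vanish and are not moved at all.
-/

open Metric Set
open scoped ENNReal symmDiff Topology

section Concentration

variable {E : Type*} [PseudoMetricSpace E] [MeasurableSpace E]

/-- The Lévy concentration function of `ν`: the largest mass of a closed ball of radius `δ`. -/
noncomputable def concentration (ν : Measure E) (δ : ℝ) : ℝ≥0∞ :=
  ⨆ x, ν (closedBall x δ)

theorem exists_pos_forall_subset_compl_or_measure_lt {ν : Measure E} [ν.OuterRegular]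
    [NullSingletonClass ν] {K : Set E} (hK : IsCompact K) {ε : ℝ≥0∞} (hε : 0 < ε) :
    ∃ δ > 0, ∀ x, closedBall x δ ⊆ Kᶜ ∨ ν (closedBall x δ) < ε := by
  have hU (y : E) : ∃ U ⊇ {y}, IsOpen U ∧ ν U < ε :=
    exists_isOpen_lt_of_lt {y} ε (by rwa [measure_singleton])
  choose U hyU hUo hUε using hU
  obtain ⟨δ, hδ, hball⟩ := lebesgue_number_lemma_of_metric hK hUo
    fun y _ ↦ mem_iUnion.2 ⟨y, hyU y rfl⟩
  refine ⟨δ / 3, by positivity, fun x ↦ or_iff_not_imp_left.2 fun hx ↦ ?_⟩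
  obtain ⟨z, hzx, hzK⟩ := not_subset.1 hx
  obtain ⟨y, hy⟩ := hball z (not_notMem.1 hzK)
  have hsub : closedBall x (δ / 3) ⊆ ball z δ :=
    closedBall_subset_ball' (by linarith [mem_closedBall'.1 hzx])
  exact (measure_mono (hsub.trans hy)).trans_lt (hUε y)

theorem tendsto_concentration_nhds_zero [CompleteSpace E] [SecondCountableTopology E]
    [BorelSpace E] (ν : Measure E) [IsFiniteMeasure ν] [NullSingletonClass ν] :
    Tendsto (concentration ν) (𝓝 0) (𝓝 0) := by
  refine ENNReal.tendsto_nhds_zero.2 fun ε hε ↦ ?_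
  obtain ⟨K, hK, hKε⟩ :=
    isTightMeasureSet_iff_exists_isCompact_measure_compl_le.1
      (isTightMeasureSet_singleton (μ := ν)) ε hε
  obtain ⟨δ, hδ, hball⟩ := exists_pos_forall_subset_compl_or_measure_lt (ν := ν) hK hε
  filter_upwards [Iio_mem_nhds hδ] with η hη
  refine iSup_le fun x ↦ (measure_mono (closedBall_subset_closedBall (le_of_lt hη))).trans ?_
  rcases hball x with hx | hx
  · exact (measure_mono hx).trans (hKε ν rfl)
  · exact hx.le

end Concentration

theorem iInter_symmDiff_iInter_subset {α : Type*} {ι : Sort*} (s t : ι → Set α) :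
    (⋂ i, s i) ∆ (⋂ i, t i) ⊆ ⋃ i, s i ∆ t i := by
  simpa only [← compl_iInter, compl_symmDiff_compl] using
    iUnion_symmDiff_iUnion_subset (f := fun i ↦ (s i)ᶜ) (g := fun i ↦ (t i)ᶜ)

theorem setOf_le_symmDiff_setOf_le_subset {Ω : Type*} (X Z : Ω → ℝ) (t δ : ℝ) :
    {ω | X ω ≤ t} ∆ {ω | Z ω ≤ t} ⊆ Z ⁻¹' closedBall t δ ∪ {ω | δ ≤ dist (X ω) (Z ω)} := by
  intro ω hω
  by_contra! hfar
  simp only [mem_union, mem_preimage, mem_closedBall, mem_ofPred_eq, not_or, not_le,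
    Real.dist_eq, abs_lt, lt_abs] at hfar
  obtain ⟨hZt, hXZ⟩ := hfar
  rcases hω with ⟨hX, hZ⟩ | ⟨hZ, hX⟩ <;> simp only [mem_ofPred_eq, not_le] at hX hZ <;>
    rcases hZt with h | h <;> linarith

section HalfLineDist

variable {Ω : Type*} [MeasurableSpace Ω] {μ : Measure Ω} {X Z : Ω → ℝ}

/-- The largest probability that a threshold separates two real random variables. Unlike the
Kolmogorov distance it depends on the joint law; it bounds the contribution of one coordinate to
the multivariate Kolmogorov distance. -/
noncomputable def halfLineDist (μ : Measure Ω) (X Z : Ω → ℝ) : ℝ≥0∞ :=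
  ⨆ t, μ ({ω | X ω ≤ t} ∆ {ω | Z ω ≤ t})

theorem halfLineDist_eq_zero_of_ae_eq (h : X =ᵐ[μ] Z) : halfLineDist μ X Z = 0 := by
  refine ENNReal.iSup_eq_zero.2 fun t ↦ measure_symmDiff_eq_zero_iff.2 ?_
  filter_upwards [h] with ω hω
  exact congrArg (· ≤ t) hω

theorem halfLineDist_ne_top [IsFiniteMeasure μ] (X Z : Ω → ℝ) : halfLineDist μ X Z ≠ ∞ :=
  ne_top_of_le_ne_top (measure_ne_top μ univ) (iSup_le fun _ ↦ measure_mono (subset_univ _))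

theorem halfLineDist_le_concentration_add (hZ : AEMeasurable Z μ) (δ : ℝ) :
    halfLineDist μ X Z ≤ concentration (μ.map Z) δ + μ {ω | δ ≤ dist (X ω) (Z ω)} := by
  refine iSup_le fun t ↦ ?_
  calc μ ({ω | X ω ≤ t} ∆ {ω | Z ω ≤ t})
      ≤ μ (Z ⁻¹' closedBall t δ) + μ {ω | δ ≤ dist (X ω) (Z ω)} :=
        (measure_mono (setOf_le_symmDiff_setOf_le_subset X Z t δ)).trans (measure_union_le _ _)
    _ ≤ concentration (μ.map Z) δ + μ {ω | δ ≤ dist (X ω) (Z ω)} := by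
        rw [← Measure.map_apply_of_aemeasurable hZ measurableSet_closedBall]
        gcongr
        exact le_iSup (fun x ↦ μ.map Z (closedBall x δ)) t

theorem tendsto_halfLineDist_of_tendstoInMeasure [IsFiniteMeasure μ] {ι : Type*} {l : Filter ι}
    {X : ι → Ω → ℝ} (hZ : AEMeasurable Z μ) [NullSingletonClass (μ.map Z)]
    (h : TendstoInMeasure μ X l Z) : Tendsto (fun n ↦ halfLineDist μ (X n) Z) l (𝓝 0) := by
  refine ENNReal.tendsto_nhds_zero.2 fun ε hε ↦ ?_
  have hconc : ∀ᶠ δ in 𝓝[>] 0, concentration (μ.map Z) δ ≤ ε / 2 :=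
    nhdsWithin_le_nhds <|
      ENNReal.tendsto_nhds_zero.1 (tendsto_concentration_nhds_zero _) _ (ENNReal.half_pos hε.ne')
  obtain ⟨δ, hδε, hδ⟩ := (hconc.and self_mem_nhdsWithin).exists
  filter_upwards [ENNReal.tendsto_nhds_zero.1 (tendstoInMeasure_iff_dist.1 h δ hδ) _
    (ENNReal.half_pos hε.ne')] with n hn
  calc halfLineDist μ (X n) Z
      ≤ concentration (μ.map Z) δ + μ {ω | δ ≤ dist (X n ω) (Z ω)} :=
        halfLineDist_le_concentration_add hZ δ
    _ ≤ ε / 2 + ε / 2 := add_le_add hδε hn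
    _ = ε := ENNReal.add_halves ε

end HalfLineDist

section KolDistVec

variable {Ω : Type*} [MeasurableSpace Ω] {d : ℕ}

theorem kolDistVec_nonneg (μ : Measure Ω) (ξ ζ : Ω → EuclideanSpace ℝ (Fin d)) :
    0 ≤ kolDistVec μ ξ ζ :=
  Real.iSup_nonneg fun _ ↦ abs_nonneg _

variable {μ : Measure Ω} [IsFiniteMeasure μ]

theorem abs_measureReal_sub_measureReal_le_measureReal_symmDiff (s t : Set Ω) :
    |μ.real s - μ.real t| ≤ μ.real (s ∆ t) := by
  have hle (u v : Set Ω) : μ.real u ≤ μ.real v + μ.real (u ∆ v) :=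
    (measureReal_mono (le_symmDiff_sup_right u v)).trans <|
      (measureReal_union_le _ _).trans_eq (add_comm _ _)
  rw [abs_sub_le_iff, sub_le_iff_le_add', sub_le_iff_le_add']
  exact ⟨hle s t, symmDiff_comm s t ▸ hle t s⟩

theorem kolDistVec_le_sum_halfLineDist (ξ ζ : Ω → EuclideanSpace ℝ (Fin d)) :
    kolDistVec μ ξ ζ ≤ (∑ i, halfLineDist μ (ξ · i) (ζ · i)).toReal := by
  refine ciSup_le fun x ↦ ?_
  refine (abs_measureReal_sub_measureReal_le_measureReal_symmDiff _ _).trans ?_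
  refine ENNReal.toReal_mono
    (ENNReal.sum_ne_top.2 fun i _ ↦ halfLineDist_ne_top (ξ · i) (ζ · i)) ?_
  simp only [ofPred_forall]
  calc μ ((⋂ i, {ω | ξ ω i ≤ x i}) ∆ ⋂ i, {ω | ζ ω i ≤ x i})
      ≤ μ (⋃ i, {ω | ξ ω i ≤ x i} ∆ {ω | ζ ω i ≤ x i}) :=
        measure_mono (iInter_symmDiff_iInter_subset _ _)
    _ ≤ ∑ i, μ ({ω | ξ ω i ≤ x i} ∆ {ω | ζ ω i ≤ x i}) := measure_iUnion_fintype_le μ _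
    _ ≤ ∑ i, halfLineDist μ (ξ · i) (ζ · i) := by
        gcongr with i
        exact le_iSup (fun t ↦ μ ({ω | ξ ω i ≤ t} ∆ {ω | ζ ω i ≤ t})) (x i)

theorem tendsto_kolDistVec_of_forall_tendsto_halfLineDist {ι : Type*} {l : Filter ι}
    {Y : ι → Ω → EuclideanSpace ℝ (Fin d)} {ξ : Ω → EuclideanSpace ℝ (Fin d)}
    (h : ∀ i, Tendsto (fun n ↦ halfLineDist μ (Y n · i) (ξ · i)) l (𝓝 0)) :
    Tendsto (fun n ↦ kolDistVec μ (Y n) ξ) l (𝓝 0) := by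
  have hsum := tendsto_finsetSum Finset.univ fun i _ ↦ h i
  rw [Finset.sum_const_zero] at hsum
  exact squeeze_zero (fun n ↦ kolDistVec_nonneg μ (Y n) ξ)
    (fun n ↦ kolDistVec_le_sum_halfLineDist (Y n) ξ)
    ((ENNReal.tendsto_toReal ENNReal.zero_ne_top).comp hsum)

theorem tendsto_kolDistVec_smul {ξ : Ω → EuclideanSpace ℝ (Fin d)}
    (hξ : ∀ i, AEMeasurable (ξ · i) μ)
    (hatom : ∀ i, (ξ · i) =ᵐ[μ] 0 ∨ NullSingletonClass (μ.map (ξ · i)))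
    {c : ℕ → ℝ} (hc : Tendsto c atTop (𝓝 1)) :
    Tendsto (fun n ↦ kolDistVec μ (fun ω ↦ c n • ξ ω) ξ) atTop (𝓝 0) := by
  refine tendsto_kolDistVec_of_forall_tendsto_halfLineDist fun i ↦ ?_
  simp only [PiLp.smul_apply, smul_eq_mul]
  rcases hatom i with hzero | hnull
  · have hscale (n : ℕ) : (fun ω ↦ c n * ξ ω i) =ᵐ[μ] (ξ · i) := by
      filter_upwards [hzero] with ω hω
      simp [hω]
    simp only [halfLineDist_eq_zero_of_ae_eq (hscale _), tendsto_const_nhds]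
  · refine tendsto_halfLineDist_of_tendstoInMeasure (hξ i) <|
      tendstoInMeasure_of_tendsto_ae (fun n ↦ ((hξ i).const_mul (c n)).aestronglyMeasurable) <|
        .of_forall fun ω ↦ ?_
    simpa only [one_mul] using hc.mul_const (ξ ω i)

end KolDistVec

section ConvexDist

variable {Ω : Type*} [MeasurableSpace Ω] {μ : Measure Ω} [IsProbabilityMeasure μ] {d : ℕ}
  {ξ ζ : Ω → EuclideanSpace ℝ (Fin d)}

theorem convexDist_eq_one_of_ae_separated {A : Set (EuclideanSpace ℝ (Fin d))}
    (hA : MeasurableSet A) (hconv : Convex ℝ A) (hξ : ∀ᵐ ω ∂μ, ξ ω ∉ A)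
    (hζ : ∀ᵐ ω ∂μ, ζ ω ∈ A) : convexDist μ ξ ζ = 1 := by
  have hle (B : {B : Set (EuclideanSpace ℝ (Fin d)) // MeasurableSet B ∧ Convex ℝ B}) :
      |μ.real (ξ ⁻¹' B.1) - μ.real (ζ ⁻¹' B.1)| ≤ 1 :=
    abs_sub_le_of_nonneg_of_le measureReal_nonneg measureReal_le_one
      measureReal_nonneg measureReal_le_one
  have hξA : μ (ξ ⁻¹' A) = 0 := measure_eq_zero_iff_ae_notMem.2 hξ
  have hζA : μ (ζ ⁻¹' A) = 1 := (measure_congr (eventuallyEq_univ.2 hζ)).trans measure_univ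
  have : Nonempty {B : Set (EuclideanSpace ℝ (Fin d)) // MeasurableSet B ∧ Convex ℝ B} :=
    ⟨⟨A, hA, hconv⟩⟩
  refine le_antisymm (ciSup_le hle) (le_ciSup_of_le ⟨1, forall_mem_range.2 hle⟩ ⟨A, hA, hconv⟩ ?_)
  simp [hξA, hζA]

theorem convexDist_smul_self_eq_one {r c : ℝ} (hr : 0 < r) (hc : 1 < |c|)
    (hξ : ∀ᵐ ω ∂μ, ‖ξ ω‖ = r) : convexDist μ (fun ω ↦ c • ξ ω) ξ = 1 := by
  refine convexDist_eq_one_of_ae_separated measurableSet_closedBall (convex_closedBall 0 r) ?_ ?_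
  all_goals filter_upwards [hξ] with ω hω
  · rw [mem_closedBall_zero_iff, not_le, norm_smul, hω]
    exact lt_mul_of_one_lt_left hr hc
  · exact mem_closedBall_zero_iff.2 hω.le

end ConvexDist

section NullSingletonClass

theorem countable_cos_preimage_singleton (t : ℝ) : (cos ⁻¹' {t}).Countable := by
  by_cases h : ∃ y, cos y = t
  · obtain ⟨y, rfl⟩ := h
    refine ((countable_range fun k : ℤ ↦ 2 * k * π + y).union
      (countable_range fun k : ℤ ↦ 2 * k * π - y)).mono fun x hx ↦ ?_
    obtain ⟨k, hk | hk⟩ := Real.cos_eq_cos_iff.1 (Eq.symm hx)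
    · exact Or.inl ⟨k, hk.symm⟩
    · exact Or.inr ⟨k, hk.symm⟩
  · exact countable_empty.mono fun x hx ↦ h ⟨x, hx⟩

theorem countable_sin_preimage_singleton (t : ℝ) : (sin ⁻¹' {t}).Countable := by
  have h := (countable_cos_preimage_singleton t).preimage (sub_right_injective (b := π / 2))
  rwa [← preimage_comp, show cos ∘ (π / 2 - ·) = sin from funext cos_pi_div_two_sub] at h

theorem nullSingletonClass_map_comp {Ω α β : Type*} [MeasurableSpace Ω] [MeasurableSpace α]
    [MeasurableSpace β] [MeasurableSingletonClass β] {μ : Measure Ω} {X : Ω → α} {f : α → β}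
    (hX : AEMeasurable X μ) [NullSingletonClass (μ.map X)] (hf : Measurable f)
    (hcount : ∀ b, (f ⁻¹' {b}).Countable) : NullSingletonClass (μ.map (f ∘ X)) where
  measure_singleton b := by
    rw [← AEMeasurable.map_map_of_aemeasurable hf.aemeasurable hX,
      Measure.map_apply hf (measurableSet_singleton b), (hcount b).measure_zero]

end NullSingletonClass

theorem norm_eq_sqrt_of_forall_apply_eq_ite {d : ℕ} (hd : 2 ≤ d) {a b : ℝ}
    {x : EuclideanSpace ℝ (Fin d)}
    (hx : ∀ i, x i = if (i : ℕ) = 0 then a else if (i : ℕ) = 1 then b else 0) :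
    ‖x‖ = √(a ^ 2 + b ^ 2) := by
  obtain ⟨e, rfl⟩ := Nat.exists_eq_add_of_le' hd
  simp [EuclideanSpace.norm_eq, Fin.sum_univ_succ, hx]

theorem convexDist_one_kolDist_tendsto_zero_general
    {Ω : Type*} [MeasurableSpace Ω] (μ : Measure Ω) [IsProbabilityMeasure μ] {d : ℕ} (hd : 2 ≤ d)
    {Θ : Ω → ℝ} (hΘ : AEMeasurable Θ μ) [NullSingletonClass (μ.map Θ)]
    {ξ : Ω → EuclideanSpace ℝ (Fin d)}
    (hξ : ∀ ω i, ξ ω i = if (i : ℕ) = 0 then cos (Θ ω) else if (i : ℕ) = 1 then sin (Θ ω) else 0)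
    {c : ℕ → ℝ} (hc : Tendsto c atTop (𝓝 1)) :
    (∀ n, 1 < |c n| → convexDist μ (fun ω ↦ c n • ξ ω) ξ = 1) ∧
      Tendsto (fun n ↦ kolDistVec μ (fun ω ↦ c n • ξ ω) ξ) atTop (𝓝 0) := by
  have hnorm (ω : Ω) : ‖ξ ω‖ = 1 := by
    rw [norm_eq_sqrt_of_forall_apply_eq_ite hd (hξ ω), cos_sq_add_sin_sq, sqrt_one]
  refine ⟨fun n hn ↦ convexDist_smul_self_eq_one one_pos hn (.of_forall hnorm),
    tendsto_kolDistVec_smul (fun i ↦ ?_) (fun i ↦ ?_) hc⟩ <;> simp only [hξ] <;> split_ifs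
  · exact Real.measurable_cos.comp_aemeasurable hΘ
  · exact Real.measurable_sin.comp_aemeasurable hΘ
  · exact aemeasurable_const
  · exact .inr (nullSingletonClass_map_comp (f := cos) hΘ Real.measurable_cos
      countable_cos_preimage_singleton)
  · exact .inr (nullSingletonClass_map_comp (f := sin) hΘ Real.measurable_sin
      countable_sin_preimage_singleton)
  · exact .inl .rfl

/-- Let `d ≥ 2` and let `ξ = (cos Θ, sin Θ, 0, …, 0)` with `Θ`
uniform on `[0,2π)`, i.e. `ξ` is uniform on the unit circle in `ℝ^d`. With
`Y_n := (1 + 1/n)·ξ`, the convex distance satisfies `d_C(Y_n, ξ) = 1` for all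
`n ≥ 1`, while the multivariate Kolmogorov distance satisfies `d_K(Y_n, ξ) → 0`.
In particular, `d_C` and `d_K` are not equivalent for `d ≥ 2`. -/
theorem convexDist_one_kolDist_tendsto_zero
    {Ω : Type*} [MeasurableSpace Ω] (μ : Measure Ω) [IsProbabilityMeasure μ]
    (d : ℕ) (hd : 2 ≤ d)
    (Θ : Ω → ℝ) (hΘ_meas : Measurable Θ)
    (hΘ_law : μ.map Θ
      = (ENNReal.ofReal (2 * π))⁻¹ • volume.restrict (Set.Ico 0 (2 * π)))
    (ξ : Ω → EuclideanSpace ℝ (Fin d))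
    (hξ : ∀ ω i, ξ ω i
      = if (i : ℕ) = 0 then Real.cos (Θ ω)
        else if (i : ℕ) = 1 then Real.sin (Θ ω) else 0)
    (Y : ℕ → Ω → EuclideanSpace ℝ (Fin d))
    (hY : ∀ n ω, Y n ω = (1 + 1 / (n : ℝ)) • ξ ω) :
    (∀ n : ℕ, 1 ≤ n → convexDist μ (Y n) ξ = 1) ∧
      Tendsto (fun n => kolDistVec μ (Y n) ξ) atTop (nhds 0) := by
  have : NullSingletonClass (μ.map Θ) := ⟨fun t ↦ by simp [hΘ_law]⟩
  obtain rfl : Y = fun (n : ℕ) ω ↦ (1 + 1 / (n : ℝ)) • ξ ω := funext₂ hY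
  have hc : Tendsto (fun n : ℕ ↦ 1 + 1 / (n : ℝ)) atTop (nhds 1) := by
    simpa using (tendsto_one_div_atTop_nhds_zero_nat (𝕜 := ℝ)).const_add 1
  have h := convexDist_one_kolDist_tendsto_zero_general μ hd hΘ_meas.aemeasurable hξ hc
  refine ⟨fun n hn ↦ h.1 n (lt_abs.2 (.inl ?_)), h.2⟩
  have : (0 : ℝ) < 1 / n := by positivity
  linarith
end
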